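/- arXiv:1312.7860 — 3 statements merged into one kernel-verified Lean document; each statement's English description precedes it below -/
import Mathlib

section
/- Let Φ : ℝ → ℝ be the standard normal CDF. If k > √(2π), then there exists b ∈ ℝ such that the equation Φ(k·θ + b) = θ has at least three distinct solutions θ in the open interval (0,1). -/
/-- The standard normal cumulative distribution function. -/
noncomputable def stdNormalCDF (x : ℝ) : ℝ :=
  ∫ t in Set.Iic x, (Real.sqrt (2 * Real.pi))⁻¹ * Real.exp (-t ^ 2 / 2)

/-!
Take `b = -k / 2`. Since `Φ x + Φ (-x) = 1`, the map `θ ↦ Φ (k * θ + b)` commutes with the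
reflection `θ ↦ 1 - θ`, so it fixes `1 / 2`, where its slope is `k / √(2π) > 1`. Hence it lies below
the diagonal just to the left of `1 / 2`, while it is positive at `0`: it has a fixed point in
`(0, 1 / 2)`, and the reflection of that one is a third.
-/

open Filter Function MeasureTheory ProbabilityTheory Set
open scoped NNReal Topology

section FixedPoints

theorem eventually_lt_self_nhdsLT_of_one_lt_deriv {f : ℝ → ℝ} {f' c : ℝ}
    (hf : HasDerivWithinAt f f' (Iio c) c) (hf' : 1 < f') (hc : IsFixedPt f c) :
    ∀ᶠ x in 𝓝[<] c, f x < x := by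
  have hslope : ∀ᶠ x in 𝓝[<] c, 1 < slope f c x :=
    ((hasDerivWithinAt_iff_tendsto_slope' self_notMem_Iio).mp hf).eventually_const_lt hf'
  filter_upwards [hslope, self_mem_nhdsWithin] with x hx hxc
  rw [slope_def_field, hc.eq, one_lt_div_of_neg (sub_neg.mpr hxc)] at hx
  linarith

theorem exists_isFixedPt_mem_Ioo_of_one_lt_deriv {f : ℝ → ℝ} {f' a c : ℝ} (hac : a < c)
    (hcont : ContinuousOn f (Icc a c)) (ha : a < f a) (hc : IsFixedPt f c)
    (hf : HasDerivWithinAt f f' (Iio c) c) (hf' : 1 < f') :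
    ∃ x ∈ Ioo a c, IsFixedPt f x := by
  obtain ⟨d, hd, had, hdc⟩ :=
    ((eventually_lt_self_nhdsLT_of_one_lt_deriv hf hf' hc).and (Ioo_mem_nhdsLT hac)).exists
  have hcont' : ContinuousOn (fun x => f x - x) (Icc a d) :=
    (hcont.mono (Icc_subset_Icc_right hdc.le)).sub continuousOn_id
  obtain ⟨x, hx, hfx⟩ :=
    intermediate_value_Ioo' had.le hcont' ⟨sub_neg.mpr hd, sub_pos.mpr ha⟩
  exact ⟨x, Ioo_subset_Ioo_right hdc.le hx, sub_eq_zero.mp hfx⟩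

variable {F : ℝ → ℝ} {k : ℝ}

theorem isFixedPt_one_sub_of_add_neg_eq_one (hF : ∀ x, F x + F (-x) = 1) {θ : ℝ}
    (hθ : IsFixedPt (fun θ => F (k * θ + -(k / 2))) θ) :
    IsFixedPt (fun θ => F (k * θ + -(k / 2))) (1 - θ) := by
  have hreflect : k * (1 - θ) + -(k / 2) = -(k * θ + -(k / 2)) := by ring
  simp only [IsFixedPt, hreflect] at hθ ⊢
  linarith [hF (k * θ + -(k / 2))]

theorem isFixedPt_one_half_of_add_neg_eq_one (hF : ∀ x, F x + F (-x) = 1) :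
    IsFixedPt (fun θ => F (k * θ + -(k / 2))) (1 / 2) := by
  have hzero : F 0 + F 0 = 1 := by simpa only [neg_zero] using hF 0
  have hcenter : k * (1 / 2) + -(k / 2) = 0 := by ring
  simp only [IsFixedPt, hcenter]
  linarith

theorem exists_isFixedPt_mem_Ioo_zero_half_of_add_neg_eq_one {F' : ℝ} (hF : ∀ x, F x + F (-x) = 1)
    (hcont : Continuous F) (hpos : 0 < F (-(k / 2))) (hderiv : HasDerivAt F F' 0)
    (hslope : 1 < F' * k) :
    ∃ θ ∈ Ioo 0 (1 / 2), IsFixedPt (fun θ => F (k * θ + -(k / 2))) θ := by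
  have hinner : HasDerivAt (fun θ : ℝ => k * θ + -(k / 2)) k (1 / 2) := by
    simpa only [mul_one] using ((hasDerivAt_id' (1 / 2 : ℝ)).const_mul k).add_const (-(k / 2))
  have houter : HasDerivAt (fun θ => F (k * θ + -(k / 2))) (F' * k) (1 / 2) :=
    hderiv.comp_of_eq _ hinner (by ring)
  exact exists_isFixedPt_mem_Ioo_of_one_lt_deriv one_half_pos (by fun_prop)
    (by simpa only [mul_zero, zero_add] using hpos) (isFixedPt_one_half_of_add_neg_eq_one hF)
    houter.hasDerivWithinAt hslope

end FixedPoints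

section IntegralIic

variable {E : Type*} [NormedAddCommGroup E] [NormedSpace ℝ E] {f : ℝ → E}

theorem integral_Iic_add_integral_Iic_neg (hf : Integrable f) (heven : Function.Even f) (x : ℝ) :
    (∫ t in Iic x, f t) + ∫ t in Iic (-x), f t = ∫ t, f t := by
  have hreflect : ∫ t in Iic (-x), f t = ∫ t in Ioi x, f t := by
    simpa only [heven _, neg_neg] using integral_comp_neg_Iic (-x) f
  rw [hreflect]
  exact intervalIntegral.integral_Iic_add_Ioi hf.integrableOn hf.integrableOn

theorem hasDerivAt_integral_Iic [CompleteSpace E] {x : ℝ} (hf : Integrable f)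
    (hcont : ContinuousAt f x) :
    HasDerivAt (fun y => ∫ t in Iic y, f t) (f x) x := by
  have hsplit (y : ℝ) : ∫ t in Iic y, f t = (∫ t in Iic x, f t) + ∫ t in x..y, f t := by
    rw [← intervalIntegral.integral_Iic_sub_Iic hf.integrableOn hf.integrableOn,
      add_sub_cancel]
  rw [funext hsplit]
  exact (intervalIntegral.integral_hasDerivAt_right hf.intervalIntegrable
    hf.aestronglyMeasurable.stronglyMeasurableAtFilter hcont).const_add _

end IntegralIic

section GaussianPDF

theorem continuous_gaussianPDFReal (μ : ℝ) (v : ℝ≥0) : Continuous (gaussianPDFReal μ v) := by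
  rw [gaussianPDFReal_def]
  fun_prop

theorem even_gaussianPDFReal_zero (v : ℝ≥0) : Function.Even (gaussianPDFReal 0 v) := fun t => by
  simp only [gaussianPDFReal_def, sub_zero, neg_sq]

theorem gaussianPDFReal_self (μ : ℝ) (v : ℝ≥0) :
    gaussianPDFReal μ v μ = (√(2 * Real.pi * v))⁻¹ := by
  simp [gaussianPDFReal_def]

end GaussianPDF

theorem stdNormalCDF_eq_integral_gaussianPDFReal :
    stdNormalCDF = fun x => ∫ t in Iic x, gaussianPDFReal 0 1 t := by
  simp only [funext_iff, stdNormalCDF, gaussianPDFReal_def, NNReal.coe_one, mul_one, sub_zero,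
    implies_true]

theorem stdNormalCDF_add_stdNormalCDF_neg (x : ℝ) : stdNormalCDF x + stdNormalCDF (-x) = 1 := by
  rw [stdNormalCDF_eq_integral_gaussianPDFReal, ← integral_gaussianPDFReal_eq_one 0 one_ne_zero]
  exact integral_Iic_add_integral_Iic_neg (integrable_gaussianPDFReal 0 1)
    (even_gaussianPDFReal_zero 1) x

theorem stdNormalCDF_pos (x : ℝ) : 0 < stdNormalCDF x := by
  have hsupport : support (gaussianPDFReal 0 1) = univ :=
    support_eq_univ fun t => (gaussianPDFReal_pos 0 1 t one_ne_zero).ne'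
  rw [stdNormalCDF_eq_integral_gaussianPDFReal, setIntegral_pos_iff_support_of_nonneg_ae
    (ae_of_all _ (gaussianPDFReal_nonneg 0 1)) (integrable_gaussianPDFReal 0 1).integrableOn,
    hsupport, univ_inter, Real.volume_Iic]
  exact ENNReal.zero_lt_top

theorem hasDerivAt_stdNormalCDF (x : ℝ) :
    HasDerivAt stdNormalCDF (gaussianPDFReal 0 1 x) x := by
  rw [stdNormalCDF_eq_integral_gaussianPDFReal]
  exact hasDerivAt_integral_Iic (integrable_gaussianPDFReal 0 1)
    (continuous_gaussianPDFReal 0 1).continuousAt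

theorem continuous_stdNormalCDF : Continuous stdNormalCDF :=
  continuous_iff_continuousAt.mpr fun x => (hasDerivAt_stdNormalCDF x).continuousAt

theorem stmt_1 (k : ℝ) (hk : k > Real.sqrt (2 * Real.pi)) :
    ∃ b : ℝ, ∃ θ₁ θ₂ θ₃ : ℝ,
      θ₁ ∈ Set.Ioo (0 : ℝ) 1 ∧ θ₂ ∈ Set.Ioo (0 : ℝ) 1 ∧ θ₃ ∈ Set.Ioo (0 : ℝ) 1 ∧
      θ₁ ≠ θ₂ ∧ θ₁ ≠ θ₃ ∧ θ₂ ≠ θ₃ ∧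
      stdNormalCDF (k * θ₁ + b) = θ₁ ∧
      stdNormalCDF (k * θ₂ + b) = θ₂ ∧
      stdNormalCDF (k * θ₃ + b) = θ₃ := by
  have hslope : 1 < gaussianPDFReal 0 1 0 * k := by
    rwa [gaussianPDFReal_self, NNReal.coe_one, mul_one, ← div_eq_inv_mul,
      one_lt_div (Real.sqrt_pos.mpr Real.two_pi_pos)]
  obtain ⟨θ, ⟨hθ_pos, hθ_lt⟩, hθ⟩ := exists_isFixedPt_mem_Ioo_zero_half_of_add_neg_eq_one
    stdNormalCDF_add_stdNormalCDF_neg continuous_stdNormalCDF (stdNormalCDF_pos _)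
    (hasDerivAt_stdNormalCDF 0) hslope
  have hlt_reflect : 1 / 2 < 1 - θ := by linarith
  exact ⟨-(k / 2), θ, 1 / 2, 1 - θ, ⟨hθ_pos, by linarith⟩, by norm_num,
    ⟨by linarith, by linarith⟩, hθ_lt.ne, (hθ_lt.trans hlt_reflect).ne, hlt_reflect.ne,
    hθ, isFixedPt_one_half_of_add_neg_eq_one stdNormalCDF_add_stdNormalCDF_neg,
    isFixedPt_one_sub_of_add_neg_eq_one stdNormalCDF_add_stdNormalCDF_neg hθ⟩
end

section
/- Let α_x ≥ 0, α_p > 0 and σ_μ > 1/√(2π), set α = α_x + α_p and α_ψ = α²/(α_x + α_p²·σ_μ²). Then for every x_c ∈ ℝ and every m ∈ ℝ, the equation Φ(√α_ψ·(−x_c/√α + (α_p/α)·θ − (α_p/α)·m)) = θ has exactly one real solution θ*, and θ* ∈ (0,1). -/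
/-!
The standard normal density is bounded by `1 / √(2π)`, so `Φ` is Lipschitz with that constant, and
`θ ↦ Φ (a + k θ)` is a contraction of `ℝ` as soon as `|k| < √(2π)`. Banach's theorem gives its
unique fixed point, which is a value of `Φ` and hence lies in `(0, 1)`. In the threshold equation
`k = √α_ψ · α_p / α` satisfies `k² = α_p² / (α_x + α_p² σ_μ²)`, which for `α_p > 0` and `α_x ≥ 0` is
at most `1 / σ_μ²`, hence below `2π`.
-/

section

open MeasureTheory ProbabilityTheory Real Set
open scoped NNReal

lemma lipschitzWith_integral_Iic {E : Type*} [NormedAddCommGroup E] [NormedSpace ℝ E]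
    {f : ℝ → E} {C : ℝ≥0} (hf : Integrable f) (hC : ∀ t, ‖f t‖ ≤ C) :
    LipschitzWith C fun x ↦ ∫ t in Iic x, f t := by
  refine .of_dist_le_mul fun x y ↦ ?_
  rw [dist_eq_norm, Real.dist_eq,
    intervalIntegral.integral_Iic_sub_Iic hf.integrableOn hf.integrableOn]
  exact intervalIntegral.norm_integral_le_of_norm_le_const fun t _ ↦ hC t

lemma contractingWith_comp_add_mul {R : Type*} [NormedRing R] {f : R → R} {K : ℝ≥0} {k : R}
    (hf : LipschitzWith K f) (hk : K * ‖k‖₊ < 1) (a : R) :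
    ContractingWith (K * ‖k‖₊) fun x ↦ f (a + k * x) := by
  have affine_lipschitz : LipschitzWith ‖k‖₊ fun x ↦ a + k * x :=
    .of_dist_le_mul fun x y ↦ by
      rw [dist_add_left, dist_eq_norm, dist_eq_norm, ← mul_sub]
      exact norm_mul_le k (x - y)
  exact ⟨hk, hf.comp affine_lipschitz⟩

lemma cdf_mem_Ioo (μ : Measure ℝ) [IsProbabilityMeasure μ] [μ.IsOpenPosMeasure] (x : ℝ) :
    cdf μ x ∈ Ioo 0 1 := by
  have left_pos : 0 < μ.real (Iic x) :=
    ENNReal.toReal_pos (μ.measure_pos_of_nonempty_interior (by simp)).ne' (measure_ne_top μ _)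
  have right_pos : 0 < μ.real (Iic x)ᶜ :=
    ENNReal.toReal_pos (μ.measure_pos_of_nonempty_interior (by simp)).ne' (measure_ne_top μ _)
  rw [probReal_compl_eq_one_sub measurableSet_Iic] at right_pos
  rw [cdf_eq_real]
  exact ⟨left_pos, sub_pos.mp right_pos⟩

lemma isOpenPosMeasure_gaussianReal (μ : ℝ) {v : ℝ≥0} (hv : v ≠ 0) :
    (gaussianReal μ v).IsOpenPosMeasure :=
  (gaussianReal_absolutelyContinuous' μ hv).isOpenPosMeasure

lemma cdf_gaussianReal_eq_integral (μ : ℝ) {v : ℝ≥0} (hv : v ≠ 0) (x : ℝ) :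
    cdf (gaussianReal μ v) x = ∫ t in Iic x, gaussianPDFReal μ v t := by
  rw [cdf_eq_real, measureReal_def, gaussianReal_apply_eq_integral μ hv,
    ENNReal.toReal_ofReal (integral_nonneg (gaussianPDFReal_nonneg μ v))]

lemma gaussianPDFReal_le (μ : ℝ) (v : ℝ≥0) (x : ℝ) :
    gaussianPDFReal μ v x ≤ (√(2 * π * v))⁻¹ := by
  refine mul_le_of_le_one_right (by positivity) (exp_le_one_iff.mpr ?_)
  exact div_nonpos_of_nonpos_of_nonneg (neg_nonpos.mpr (sq_nonneg _)) (by positivity)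

lemma lipschitzWith_cdf_gaussianReal (μ : ℝ) {v : ℝ≥0} (hv : v ≠ 0) :
    LipschitzWith (√(2 * π * v))⁻¹.toNNReal (cdf (gaussianReal μ v)) := by
  rw [funext (cdf_gaussianReal_eq_integral μ hv)]
  refine lipschitzWith_integral_Iic (integrable_gaussianPDFReal μ v) fun t ↦ ?_
  rw [norm_of_nonneg (gaussianPDFReal_nonneg μ v t), coe_toNNReal _ (by positivity)]
  exact gaussianPDFReal_le μ v t

lemma existsUnique_cdf_gaussianReal_add_mul_eq (μ : ℝ) {v : ℝ≥0} {k : ℝ}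
    (hk : |k| < √(2 * π * v)) (a : ℝ) :
    ∃! θ, cdf (gaussianReal μ v) (a + k * θ) = θ := by
  have hv : v ≠ 0 := by
    rintro rfl
    exact (abs_nonneg k).not_gt (by simpa using hk)
  have factor_lt_one : (√(2 * π * v))⁻¹.toNNReal * ‖k‖₊ < 1 := by
    rw [← NNReal.coe_lt_coe, NNReal.coe_mul, coe_toNNReal _ (by positivity), coe_nnnorm,
      norm_eq_abs, NNReal.coe_one, inv_mul_lt_one₀ (by positivity)]
    exact hk
  have contracting :=
    contractingWith_comp_add_mul (lipschitzWith_cdf_gaussianReal μ hv) factor_lt_one a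
  exact ⟨_, contracting.fixedPoint_isFixedPt, fun _ ↦ contracting.fixedPoint_unique⟩

lemma stdNormalCDF_eq_cdf : stdNormalCDF = cdf (gaussianReal 0 1) := by
  ext x
  simp [stdNormalCDF, cdf_gaussianReal_eq_integral, gaussianPDFReal]

lemma stdNormalCDF_mem_Ioo (x : ℝ) : stdNormalCDF x ∈ Ioo 0 1 := by
  have := isOpenPosMeasure_gaussianReal 0 one_ne_zero
  rw [stdNormalCDF_eq_cdf]
  exact cdf_mem_Ioo _ x

lemma existsUnique_stdNormalCDF_add_mul_eq {k : ℝ} (hk : |k| < √(2 * π)) (a : ℝ) :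
    ∃! θ, stdNormalCDF (a + k * θ) = θ := by
  rw [stdNormalCDF_eq_cdf]
  exact existsUnique_cdf_gaussianReal_add_mul_eq 0 (by simpa using hk) a

lemma sq_sqrt_sq_div_mul_div {α D : ℝ} (hα : α ≠ 0) (hD : 0 ≤ D) (p : ℝ) :
    (√(α ^ 2 / D) * (p / α)) ^ 2 = p ^ 2 / D := by
  rw [mul_pow, sq_sqrt (by positivity)]
  field_simp

lemma one_lt_two_pi_mul_sq {σ : ℝ} (hσ : 1 / √(2 * π) < σ) : 1 < 2 * π * σ ^ 2 := by
  have h : (1 / √(2 * π)) ^ 2 < σ ^ 2 := by gcongr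
  rwa [div_pow, one_pow, sq_sqrt (by positivity), div_lt_iff₀' (by positivity)] at h

lemma sq_lt_two_pi_mul_add_sq_mul_sq {q p σ : ℝ} (hq : 0 ≤ q) (hp : p ≠ 0)
    (hσ : 1 / √(2 * π) < σ) : p ^ 2 < 2 * π * (q + p ^ 2 * σ ^ 2) :=
  calc p ^ 2 < p ^ 2 * (2 * π * σ ^ 2) :=
        lt_mul_of_one_lt_right (by positivity) (one_lt_two_pi_mul_sq hσ)
    _ = 2 * π * (p ^ 2 * σ ^ 2) := by ring
    _ ≤ 2 * π * (q + p ^ 2 * σ ^ 2) := by gcongr; exact le_add_of_nonneg_left hq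

end

theorem stmt_4_general (αx αp σμ : ℝ) (hα_pos : 0 < αx + αp)
    (hslope : αp ^ 2 < 2 * Real.pi * (αx + αp ^ 2 * σμ ^ 2))
    (α αψ : ℝ) (hα : α = αx + αp) (hαψ : αψ = α ^ 2 / (αx + αp ^ 2 * σμ ^ 2)) :
    ∀ xc m : ℝ,
      ∃ θ ∈ Set.Ioo (0 : ℝ) 1,
        stdNormalCDF (Real.sqrt αψ *
          (-xc / Real.sqrt α + (αp / α) * θ - (αp / α) * m)) = θ ∧
        ∀ θ' : ℝ,
          stdNormalCDF (Real.sqrt αψ *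
            (-xc / Real.sqrt α + (αp / α) * θ' - (αp / α) * m)) = θ' → θ' = θ := by
  intro xc m
  have hD : 0 < αx + αp ^ 2 * σμ ^ 2 :=
    pos_of_mul_pos_right ((sq_nonneg αp).trans_lt hslope) Real.two_pi_pos.le
  have slope_lt : |√αψ * (αp / α)| < √(2 * Real.pi) := by
    refine Real.lt_sqrt_of_sq_lt ?_
    rw [sq_abs, hαψ, sq_sqrt_sq_div_mul_div (hα ▸ hα_pos.ne') hD.le, div_lt_iff₀ hD]
    exact hslope
  have affine (θ : ℝ) : √αψ * (-xc / √α + (αp / α) * θ - (αp / α) * m) =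
      √αψ * (-xc / √α - (αp / α) * m) + √αψ * (αp / α) * θ := by ring
  simp only [affine]
  obtain ⟨θ, hθ, θ_unique⟩ := existsUnique_stdNormalCDF_add_mul_eq slope_lt _
  exact ⟨θ, hθ ▸ stdNormalCDF_mem_Ioo _, hθ, θ_unique⟩

theorem stmt_4 (αx αp σμ : ℝ) (hαx : 0 ≤ αx) (hαp : 0 < αp)
    (hσμ : σμ > 1 / Real.sqrt (2 * Real.pi))
    (α αψ : ℝ) (hα : α = αx + αp) (hαψ : αψ = α ^ 2 / (αx + αp ^ 2 * σμ ^ 2)) :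
    ∀ xc m : ℝ,
      ∃ θ ∈ Set.Ioo (0 : ℝ) 1,
        stdNormalCDF (Real.sqrt αψ *
          (-xc / Real.sqrt α + (αp / α) * θ - (αp / α) * m)) = θ ∧
        ∀ θ' : ℝ,
          stdNormalCDF (Real.sqrt αψ *
            (-xc / Real.sqrt α + (αp / α) * θ' - (αp / α) * m)) = θ' → θ' = θ := by
  exact stmt_4_general αx αp σμ (by positivity)
    (sq_lt_two_pi_mul_add_sq_mul_sq hαx hαp.ne' hσμ) α αψ hα hαψ
end

section
/- Fix α_x > 0, α_p > 0, σ_μ ≥ 0, and for σ_ε > 0 set α_z(σ_ε) = α_x²/(σ_ε²·(α_x + α_p²·σ_μ²)). Then the function σ_ε ↦ √(α_x/(α_p + α_z(σ_ε))² + σ_μ²/(1 + α_z(σ_ε)/α_p)²) tends to 0 as σ_ε tends to 0 from the right; in particular, for all sufficiently small σ_ε > 0 this quantity is strictly less than 1/√(2π). -/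
open Filter Topology

section Limits

variable {𝕜 : Type*} [Field 𝕜] [LinearOrder 𝕜] [IsStrictOrderedRing 𝕜] [TopologicalSpace 𝕜]
  [OrderTopology 𝕜]

theorem tendsto_const_div_const_add_pow_atTop (a b : 𝕜) {n : ℕ} (hn : n ≠ 0) :
    Tendsto (fun x : 𝕜 => a / (b + x) ^ n) atTop (𝓝 0) :=
  ((tendsto_pow_atTop hn).comp (tendsto_atTop_add_const_left _ b tendsto_id)).const_div_atTop a

theorem tendsto_const_div_pow_mul_const_nhdsGT_zero {a c : 𝕜} (hac : 0 < a / c) {n : ℕ}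
    (hn : n ≠ 0) : Tendsto (fun x : 𝕜 => a / (x ^ n * c)) (𝓝[>] 0) atTop := by
  have hpow : Tendsto (fun x : 𝕜 => x⁻¹ ^ n) (𝓝[>] 0) atTop :=
    (tendsto_pow_atTop hn).comp tendsto_inv_nhdsGT_zero
  refine (hpow.const_mul_atTop hac).congr fun x => ?_
  rw [inv_pow, ← div_eq_mul_inv, div_div, mul_comm c]

end Limits

/-- The precision `α_z` of the public signal `Φ⁻¹(A) + σ_ε ε` of the aggregate action `A`,
as a function of its noise level `σ_ε`. -/
noncomputable def publicPrecision (αx αp σμ σε : ℝ) : ℝ :=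
  αx ^ 2 / (σε ^ 2 * (αx + αp ^ 2 * σμ ^ 2))

/-- The quantity that the uniqueness condition for equilibria in strategies compares with
`1 / √(2π)`, as a function of the public precision `α_z`; uniqueness fails when it is smaller. -/
noncomputable def uniquenessIndex (αx αp σμ αz : ℝ) : ℝ :=
  √(αx / (αp + αz) ^ 2 + σμ ^ 2 / (1 + αz / αp) ^ 2)

theorem tendsto_publicPrecision_nhdsGT_zero {αx : ℝ} (hαx : 0 < αx) (αp σμ : ℝ) :
    Tendsto (publicPrecision αx αp σμ) (𝓝[>] 0) atTop :=
  tendsto_const_div_pow_mul_const_nhdsGT_zero (by positivity) two_ne_zero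

theorem tendsto_uniquenessIndex_atTop (αx : ℝ) {αp : ℝ} (hαp : 0 < αp) (σμ : ℝ) :
    Tendsto (uniquenessIndex αx αp σμ) atTop (𝓝 0) := by
  have hprivate : Tendsto (fun αz : ℝ => αx / (αp + αz) ^ 2) atTop (𝓝 0) :=
    tendsto_const_div_const_add_pow_atTop αx αp two_ne_zero
  have hprior : Tendsto (fun αz : ℝ => σμ ^ 2 / (1 + αz / αp) ^ 2) atTop (𝓝 0) :=
    (tendsto_const_div_const_add_pow_atTop (σμ ^ 2) 1 two_ne_zero).comp
      (tendsto_id.atTop_div_const hαp)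
  have hlim := (hprivate.add hprior).sqrt
  rw [add_zero, Real.sqrt_zero] at hlim
  exact hlim

theorem stmt_16 (αx αp σμ : ℝ) (hαx : 0 < αx) (hαp : 0 < αp) (hσμ : 0 ≤ σμ) :
    Tendsto (fun σε : ℝ =>
        Real.sqrt (αx / (αp + αx ^ 2 / (σε ^ 2 * (αx + αp ^ 2 * σμ ^ 2))) ^ 2 +
          σμ ^ 2 / (1 + (αx ^ 2 / (σε ^ 2 * (αx + αp ^ 2 * σμ ^ 2))) / αp) ^ 2))
      (𝓝[>] (0 : ℝ)) (𝓝 0) ∧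
    ∃ ε₀ > (0 : ℝ), ∀ σε : ℝ, 0 < σε → σε < ε₀ →
      Real.sqrt (αx / (αp + αx ^ 2 / (σε ^ 2 * (αx + αp ^ 2 * σμ ^ 2))) ^ 2 +
          σμ ^ 2 / (1 + (αx ^ 2 / (σε ^ 2 * (αx + αp ^ 2 * σμ ^ 2))) / αp) ^ 2) <
        1 / Real.sqrt (2 * Real.pi) := by
  have hlim : Tendsto (fun σε => uniquenessIndex αx αp σμ (publicPrecision αx αp σμ σε))
      (𝓝[>] 0) (𝓝 0) :=
    (tendsto_uniquenessIndex_atTop αx hαp σμ).comp (tendsto_publicPrecision_nhdsGT_zero hαx αp σμ)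
  have hthreshold : 0 < 1 / √(2 * Real.pi) := by positivity
  obtain ⟨ε₀, hε₀, hlt⟩ :=
    (nhdsGT_basis (0 : ℝ)).eventually_iff.1 (hlim.eventually_lt_const hthreshold)
  exact ⟨hlim, ε₀, hε₀, fun σε hpos hsmall => hlt ⟨hpos, hsmall⟩⟩
end
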